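/- Assume (X, d, μ) is complete, μ is Borel-regular and doubling, and X supports a weak 1-Poincaré inequality. Let G ⊂ X be a domain with compact closure, let E, F ⊂ G be disjoint continua each containing at least two points, and for each natural number j ≥ 1 let Γ*_j(E, F; G) be the subfamily of Γ*(E, F; G) consisting of those separating sets S with dist(S, E ∪ F) > 1/j. Then for every 1 < q < ∞, lim_{j→∞} mod_q Γ*_j(E, F; G) = mod_q Γ*(E, F; G). -/

import Mathlib

open MeasureTheory Metric Set ENNReal NNReal Filter Topology

noncomputable section

variable {X : Type*}

/-- A measure is Borel-regular: every set is contained in a Borel set of the same measure. -/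
def BorelRegular [MeasurableSpace X] (μ : Measure X) : Prop :=
  ∀ s : Set X, ∃ t : Set X, MeasurableSet t ∧ s ⊆ t ∧ μ t = μ s

/-- μ is doubling with constant `Cμ`: `0 < μ(2B) ≤ Cμ μ(B) < ∞` for all balls. -/
def IsDoublingWith [PseudoMetricSpace X] [MeasurableSpace X] (μ : Measure X) (Cμ : ℝ) : Prop :=
  ∀ (x : X) (r : ℝ), 0 < r →
    0 < μ (ball x (2 * r)) ∧ μ (ball x (2 * r)) ≤ ENNReal.ofReal Cμ * μ (ball x r) ∧
      μ (ball x r) < ⊤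

/-- `ρ` is an upper gradient of `u` on the set `V`: for every `L ≥ 0` and every
1-Lipschitz curve `γ : [0, L] → V`, `|u(γ L) − u(γ 0)| ≤ ∫₀^L ρ(γ t) dt`. -/
def IsUpperGradientOn [PseudoMetricSpace X] (u : X → ℝ) (ρ : X → ℝ≥0∞) (V : Set X) : Prop :=
  ∀ L : ℝ, 0 ≤ L → ∀ γ : ℝ → X, LipschitzOnWith 1 γ (Icc 0 L) → MapsTo γ (Icc 0 L) V →
    ENNReal.ofReal |u (γ L) - u (γ 0)| ≤ ∫⁻ t in Icc 0 L, ρ (γ t)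

/-- `X` supports a weak `p`-Poincaré inequality with constants `CP`, `lP`. -/
def WeakPoincare [PseudoMetricSpace X] [MeasurableSpace X] (μ : Measure X)
    (p CP lP : ℝ) : Prop :=
  ∀ u : X → ℝ, LocallyIntegrable u μ →
    ∀ ρ : X → ℝ≥0∞, Measurable ρ → IsUpperGradientOn u ρ univ →
    ∀ (x : X) (r : ℝ), 0 < r →
      ENNReal.ofReal (⨍ y in ball x r, |u y - ⨍ z in ball x r, u z ∂μ| ∂μ) ≤
        ENNReal.ofReal (CP * diam (ball x r)) *
          (⨍⁻ y in ball x (lP * r), ρ y ^ p ∂μ) ^ (1 / p)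

/-- `X` is Ahlfors `Q`-regular with constants `0 < a ≤ A`. -/
def AhlforsRegular [PseudoMetricSpace X] [MeasurableSpace X] (μ : Measure X)
    (Q a A : ℝ) : Prop :=
  0 < a ∧ a ≤ A ∧ ∀ (x : X) (r : ℝ), 0 < r → ENNReal.ofReal r < EMetric.diam (univ : Set X) →
    ENNReal.ofReal (a * r ^ Q) ≤ μ (ball x r) ∧ μ (ball x r) ≤ ENNReal.ofReal (A * r ^ Q)

/-- `ρ` is admissible for a family `M` of Borel measures: `∫ ρ dν ≥ 1` for all `ν ∈ M`. -/
def Admissible [MeasurableSpace X] (M : Set (Measure X)) (ρ : X → ℝ≥0∞) : Prop :=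
  Measurable ρ ∧ ∀ ν ∈ M, 1 ≤ ∫⁻ x, ρ x ∂ν

/-- The `q`-modulus of a family of Borel measures. -/
def modulus [MeasurableSpace X] (μ : Measure X) (q : ℝ) (M : Set (Measure X)) : ℝ≥0∞ :=
  ⨅ (ρ : X → ℝ≥0∞) (_ : Admissible M ρ), ∫⁻ x, ρ x ^ q ∂μ

/-- `ρ` is `q`-weakly admissible for `M`. -/
def WeaklyAdmissible [MeasurableSpace X] (μ : Measure X) (q : ℝ) (M : Set (Measure X))
    (ρ : X → ℝ≥0∞) : Prop :=
  ∃ N ⊆ M, modulus μ q N = 0 ∧ Admissible (M \ N) ρ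

/-- The family `Γ(E, F; G)` of measures `H¹` restricted to images of injective rectifiable
curves joining `E` and `F` in `G`. -/
def pathFamily [MetricSpace X] [MeasurableSpace X] [BorelSpace X] (E F G : Set X) :
    Set (Measure X) :=
  {ν | ∃ γ : ℝ → X, ContinuousOn γ (Icc 0 1) ∧ InjOn γ (Icc 0 1) ∧
    eVariationOn γ (Icc 0 1) ≠ ⊤ ∧ MapsTo γ (Icc 0 1) G ∧ γ 0 ∈ E ∧ γ 1 ∈ F ∧
    ν = (μH[1]).restrict (γ '' Icc 0 1)}

/-- `S` separates `E` from `F` in `G`: they lie in different connected components of `G \ S`. -/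
def SeparatesIn [TopologicalSpace X] (S E F G : Set X) : Prop :=
  ∃ x ∈ G \ S, ∃ y ∈ G \ S,
    E ⊆ connectedComponentIn (G \ S) x ∧ F ⊆ connectedComponentIn (G \ S) y ∧
    connectedComponentIn (G \ S) x ≠ connectedComponentIn (G \ S) y

/-- The family `Γ*(E, F; G)` of measures `H^d` restricted to `S ∩ G`, where `S` ranges over
compact subsets of the closure of `G`, of finite `H^d`-measure in `G`, separating `E` and `F`. -/
def surfaceFamilyH [MetricSpace X] [MeasurableSpace X] [BorelSpace X] (d : ℝ)
    (E F G : Set X) : Set (Measure X) :=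
  {ν | ∃ S : Set X, IsCompact S ∧ S ⊆ closure G ∧ μH[d] (S ∩ G) ≠ ⊤ ∧
    SeparatesIn S E F G ∧ ν = (μH[d]).restrict (S ∩ G)}

/-- The codimension-1 spherical Hausdorff measure associated to `μ`. -/
def codimOneHausdorff [PseudoMetricSpace X] [MeasurableSpace X] (μ : Measure X)
    (A : Set X) : ℝ≥0∞ :=
  ⨆ (δ : ℝ) (_ : 0 < δ),
    ⨅ (c : ℕ → X) (r : ℕ → ℝ) (_ : A ⊆ ⋃ i, ball (c i) (r i))
      (_ : ∀ i, 0 < r i ∧ r i ≤ δ), ∑' i, μ (ball (c i) (r i)) / ENNReal.ofReal (r i)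

/-- The integral `∫_A g d𝓗` of `g` over `A` against the codimension-1 spherical Hausdorff
measure, defined by the layer-cake formula. -/
def codimIntegral [PseudoMetricSpace X] [MeasurableSpace X] (μ : Measure X) (A : Set X)
    (g : X → ℝ≥0∞) : ℝ≥0∞ :=
  ∫⁻ s in Ioi (0 : ℝ), codimOneHausdorff μ (A ∩ {x | ENNReal.ofReal s < g x})

/-- The collection of "surfaces" of `Γ*(E, F; G)`: compact subsets of the closure of `G` of
finite codimension-1 measure in `G` separating `E` and `F` in `G`. -/
def surfaceSets [PseudoMetricSpace X] [MeasurableSpace X] (μ : Measure X) (E F G : Set X) :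
    Set (Set X) :=
  {S | IsCompact S ∧ S ⊆ closure G ∧ codimOneHausdorff μ (S ∩ G) ≠ ⊤ ∧ SeparatesIn S E F G}

/-- The `q`-modulus of a family `𝒮` of surfaces, each equipped with the codimension-1
spherical Hausdorff measure restricted to `S ∩ G`. -/
def surfModulus [PseudoMetricSpace X] [MeasurableSpace X] (μ : Measure X) (q : ℝ)
    (𝒮 : Set (Set X)) (G : Set X) : ℝ≥0∞ :=
  ⨅ (ρ : X → ℝ≥0∞)
    (_ : Measurable ρ ∧ ∀ S ∈ 𝒮, 1 ≤ codimIntegral μ (S ∩ G) ρ),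
    ∫⁻ x, ρ x ^ q ∂μ

/-- The upper Lebesgue integral of `f` over `s ⊆ ℝ`. -/
def upperIntegralOn (s : Set ℝ) (f : ℝ → ℝ≥0∞) : ℝ≥0∞ :=
  ⨅ (ψ : ℝ → ℝ≥0∞) (_ : Measurable ψ ∧ ∀ t, f t ≤ ψ t), ∫⁻ t in s, ψ t

/-- The restricted Hardy–Littlewood maximal function `M_R w`. -/
def restrMaximal [PseudoMetricSpace X] [MeasurableSpace X] (μ : Measure X) (R : ℝ)
    (w : X → ℝ≥0∞) (x : X) : ℝ≥0∞ :=
  ⨆ (r : ℝ) (_ : 0 < r ∧ r ≤ R), ⨍⁻ y in ball x r, w y ∂μ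

/-- `x` is a Lebesgue point of `v`. -/
def LebesguePoint [PseudoMetricSpace X] [MeasurableSpace X] (μ : Measure X) (v : X → ℝ)
    (x : X) : Prop :=
  Tendsto (fun r : ℝ => ⨍ y in ball x r, |v y - v x| ∂μ) (𝓝[>] 0) (𝓝 0)

/-- `u` is locally Lipschitz on `G`. -/
def IsLocallyLipschitzOn [PseudoMetricSpace X] (u : X → ℝ) (G : Set X) : Prop :=
  ∀ x ∈ G, ∃ (K : ℝ≥0) (t : Set X), t ∈ 𝓝[G] x ∧ LipschitzOnWith K u t

/-- `X` is a geodesic metric space. -/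
def IsGeodesicSpace (X : Type*) [MetricSpace X] : Prop :=
  ∀ x y : X, ∃ γ : ℝ → X, γ 0 = x ∧ γ (dist x y) = y ∧
    ∀ s ∈ Icc (0 : ℝ) (dist x y), ∀ t ∈ Icc (0 : ℝ) (dist x y), dist (γ s) (γ t) = |s - t|

/-- `G` is a domain (open connected set) with compact closure. -/
def IsDomainWithCompactClosure [TopologicalSpace X] (G : Set X) : Prop :=
  IsOpen G ∧ IsConnected G ∧ IsCompact (closure G)

/-- `E` is a nondegenerate continuum: compact, connected, with at least two points. -/
def IsNondegContinuum [TopologicalSpace X] (E : Set X) : Prop :=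
  IsCompact E ∧ IsConnected E ∧ E.Nontrivial

/-- The distance between two sets. -/
def setDist [PseudoMetricSpace X] (E F : Set X) : ℝ :=
  sInf ((fun p : X × X => dist p.1 p.2) '' (E ×ˢ F))

/-- The `s`-dimensional Hausdorff content. -/
def hContent {Y : Type*} [EMetricSpace Y] (s : ℝ) (E : Set Y) : ℝ≥0∞ :=
  ⨅ (U : ℕ → Set Y) (_ : E ⊆ ⋃ i, U i), ∑' i, EMetric.diam (U i) ^ s

end

/-!
For `1 < q < ∞`, functions that are admissible for `Γ*_j` and nearly minimize the `L^q`-norm are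
close to each other: the admissible functions for a family of measures form a convex set, these
sets decrease in `j`, and `L^q` is uniformly convex. If the moduli stay bounded, a rapidly
converging subsequence of near-minimizers therefore has a supremum whose norm barely exceeds the
limit of the minimal norms; lying above a tail of the sequence, this supremum is admissible for
every `Γ*_j`, hence for their union. By compactness, every separating surface has positive distance
to `E ∪ F`, so that the union is all of `Γ*`. Convexity needs the integrals against the surface
measures to be additive, which holds as the codimension-1 spherical Hausdorff measure is a metric
outer measure and thus a measure on Borel sets.
-/

section UniformConvexity

theorem exists_le_add_mul_of_isCompact {Y : Type*} [TopologicalSpace Y] {K : Set Y}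
    (hK : IsCompact K) {f g : Y → ℝ} (hf : Continuous f) (hg : Continuous g)
    (hg_nonneg : ∀ x ∈ K, 0 ≤ g x) (hfg : ∀ x ∈ K, g x = 0 → f x ≤ 0) {ε : ℝ} (hε : 0 < ε) :
    ∃ C, 0 ≤ C ∧ ∀ x ∈ K, f x ≤ ε + C * g x := by
  have hK' : IsCompact (K ∩ {x | ε ≤ f x}) :=
    hK.inter_right (isClosed_le continuous_const hf)
  have hg_pos : ∀ x ∈ K ∩ {x | ε ≤ f x}, 0 < g x := fun x hx =>
    (hg_nonneg x hx.1).lt_of_ne' fun h0 => (hε.trans_le hx.2).not_ge (hfg x hx.1 h0)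
  obtain ⟨C, hC⟩ := hK'.bddAbove_image
    (hf.continuousOn.div hg.continuousOn fun x hx => (hg_pos x hx).ne')
  refine ⟨max C 0, le_max_right _ _, fun x hx => ?_⟩
  have hCg : 0 ≤ max C 0 * g x := mul_nonneg (le_max_right _ _) (hg_nonneg x hx)
  rcases le_or_gt ε (f x) with h | h
  · have hle : f x / g x ≤ max C 0 := (hC (mem_image_of_mem _ ⟨hx, h⟩)).trans (le_max_left _ _)
    linarith [(div_le_iff₀ (hg_pos x ⟨hx, h⟩)).1 hle]
  · linarith

variable {q : ℝ}

theorem one_lt_midpoint_rpow (hq : 1 < q) {t : ℝ} (ht : t ∈ Icc (-1) 1) (ht0 : t ≠ 0) :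
    1 < ((1 - t) ^ q + (1 + t) ^ q) / 2 := by
  have h := (strictConvexOn_rpow hq).2 (x := 1 - t) (y := 1 + t) (sub_nonneg.2 ht.2)
    (neg_le_iff_add_nonneg'.1 ht.1) (fun h => ht0 (by linarith))
    (half_pos one_pos) (half_pos one_pos) (add_halves 1)
  simp only [smul_eq_mul] at h
  rw [show 1 / 2 * (1 - t) + 1 / 2 * (1 + t) = (1 : ℝ) by ring, Real.one_rpow] at h
  linarith

theorem exists_abs_two_mul_rpow_le (hq : 1 < q) {ε : ℝ} (hε : 0 < ε) :
    ∃ C, 0 ≤ C ∧ ∀ t ∈ Icc (-1 : ℝ) 1,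
      |2 * t| ^ q ≤ ε + C * (((1 - t) ^ q + (1 + t) ^ q) / 2 - 1) := by
  have hcont : Continuous fun t : ℝ => t ^ q := Real.continuous_rpow_const (by linarith)
  refine exists_le_add_mul_of_isCompact isCompact_Icc (by fun_prop) (by fun_prop)
    (fun t ht => ?_) (fun t ht h => ?_) hε
  · rcases eq_or_ne t 0 with rfl | ht0
    · simp
    · exact sub_nonneg.2 (one_lt_midpoint_rpow hq ht ht0).le
  · rcases eq_or_ne t 0 with rfl | ht0
    · simp [Real.zero_rpow (by linarith : q ≠ 0)]
    · exact absurd (sub_eq_zero.1 h) (one_lt_midpoint_rpow hq ht ht0).ne'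

theorem exists_abs_sub_rpow_add_le (hq : 1 < q) {ε : ℝ} (hε : 0 < ε) :
    ∃ C, 0 ≤ C ∧ ∀ a b : ℝ, 0 ≤ a → 0 ≤ b →
      |b - a| ^ q + C * ((a + b) / 2) ^ q ≤ ε * ((a + b) / 2) ^ q + C * ((a ^ q + b ^ q) / 2) := by
  obtain ⟨C, hC, h⟩ := exists_abs_two_mul_rpow_le hq hε
  refine ⟨C, hC, fun a b ha hb => ?_⟩
  obtain ⟨s, hs⟩ : ∃ s, s = (a + b) / 2 := ⟨_, rfl⟩
  rw [← hs]
  obtain hs0 | hs0 : 0 = s ∨ 0 < s := (hs ▸ by positivity : 0 ≤ s).eq_or_lt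
  · obtain rfl : a = 0 := by linarith
    obtain rfl : b = 0 := by linarith
    simp [Real.zero_rpow (by linarith : q ≠ 0), ← hs0]
  -- By homogeneity we may normalize the midpoint `s` to `1`.
  obtain ⟨t, ht⟩ : ∃ t, b - a = 2 * t * s := ⟨(b - a) / (2 * s), by field_simp⟩
  obtain rfl : a = (1 - t) * s := by linarith
  obtain rfl : b = (1 + t) * s := by linarith
  have h₁ : 0 ≤ 1 - t := nonneg_of_mul_nonneg_left ha hs0
  have h₂ : 0 ≤ 1 + t := nonneg_of_mul_nonneg_left hb hs0
  rw [ht, abs_mul, abs_of_pos hs0, Real.mul_rpow (abs_nonneg _) hs0.le, Real.mul_rpow h₁ hs0.le,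
    Real.mul_rpow h₂ hs0.le]
  linarith [mul_le_mul_of_nonneg_right (h t ⟨by linarith, by linarith⟩)
    (Real.rpow_nonneg hs0.le q)]

theorem exists_tsub_rpow_add_le (hq : 1 < q) {ε : ℝ≥0} (hε : 0 < ε) :
    ∃ C : ℝ≥0, ∀ a b : ℝ≥0∞,
      (b - a) ^ q + C * ((a + b) / 2) ^ q ≤
        ε * ((a + b) / 2) ^ q + C * ((a ^ q + b ^ q) / 2) := by
  have hq0 : 0 < q := by linarith
  obtain ⟨C, hC, h⟩ := exists_abs_sub_rpow_add_le hq (NNReal.coe_pos.2 hε)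
  lift C to ℝ≥0 using hC
  refine ⟨C, fun a b => ?_⟩
  rcases eq_or_ne (a + b) ⊤ with htop | hfin
  · simp [htop, ENNReal.top_div, hq0, hε.ne']
  obtain ⟨ha, hb⟩ := ENNReal.add_ne_top.1 hfin
  lift a to ℝ≥0 using ha
  lift b to ℝ≥0 using hb
  have hsub : ((b - a : ℝ≥0) : ℝ) ^ q ≤ |(b : ℝ) - a| ^ q := by
    rw [NNReal.coe_sub_def]
    gcongr
    exact max_le (le_abs_self _) (abs_nonneg _)
  have key : (b - a) ^ q + C * ((a + b) / 2) ^ q ≤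
      ε * ((a + b) / 2) ^ q + C * ((a ^ q + b ^ q) / 2) := by
    rw [← NNReal.coe_le_coe]
    push_cast
    linarith [h a b a.2 b.2]
  have h2 : (2 : ℝ≥0∞) = (2 : ℝ≥0) := rfl
  simp only [h2, ← ENNReal.coe_sub, ← ENNReal.coe_add, ← ENNReal.coe_div two_ne_zero,
    ← ENNReal.coe_rpow_of_nonneg _ hq0.le]
  exact_mod_cast key

end UniformConvexity

section LpFunctions

variable {α ι : Type*} [MeasurableSpace α] {μ : Measure α} {p : ℝ≥0∞}

theorem eLpNorm_rpow_toReal_eq_lintegral (hp0 : p ≠ 0) (hp : p ≠ ⊤) (f : α → ℝ≥0∞) :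
    eLpNorm f p μ ^ p.toReal = ∫⁻ x, f x ^ p.toReal ∂μ := by
  simp_rw [eLpNorm_eq_lintegral_rpow_enorm_toReal hp0 hp, enorm_eq_self, one_div,
    ENNReal.rpow_inv_rpow (toReal_pos hp0 hp).ne']

theorem exists_eLpNorm_tsub_rpow_add_le (hp1 : 1 < p) (hp : p ≠ ⊤) {ε : ℝ≥0} (hε : 0 < ε) :
    ∃ C : ℝ≥0, ∀ f g : α → ℝ≥0∞, Measurable f → Measurable g →
      eLpNorm (g - f) p μ ^ p.toReal + C * eLpNorm ((2⁻¹ : ℝ≥0) • (f + g)) p μ ^ p.toReal ≤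
        ε * eLpNorm ((2⁻¹ : ℝ≥0) • (f + g)) p μ ^ p.toReal +
          C * ((eLpNorm f p μ ^ p.toReal + eLpNorm g p μ ^ p.toReal) / 2) := by
  have hp0 : p ≠ 0 := (zero_lt_one.trans hp1).ne'
  have hq1 : 1 < p.toReal := by simpa using (ENNReal.toReal_lt_toReal one_ne_top hp).2 hp1
  obtain ⟨C, hC⟩ := exists_tsub_rpow_add_le hq1 hε
  have hmid (a b : ℝ≥0∞) : (2⁻¹ : ℝ≥0) • (a + b) = (a + b) / 2 := by
    rw [ENNReal.smul_def, smul_eq_mul, ENNReal.coe_inv two_ne_zero, mul_comm, ← div_eq_mul_inv]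
    rfl
  refine ⟨C, fun f g hf hg => ?_⟩
  simp only [eLpNorm_rpow_toReal_eq_lintegral hp0 hp, Pi.smul_apply, Pi.add_apply, Pi.sub_apply,
    hmid]
  calc ∫⁻ x, (g x - f x) ^ p.toReal ∂μ + C * ∫⁻ x, ((f x + g x) / 2) ^ p.toReal ∂μ
      = ∫⁻ x, ((g x - f x) ^ p.toReal + C * ((f x + g x) / 2) ^ p.toReal) ∂μ := by
        rw [lintegral_add_left (by fun_prop), lintegral_const_mul _ (by fun_prop)]
    _ ≤ ∫⁻ x, (ε * ((f x + g x) / 2) ^ p.toReal +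
          C * ((f x ^ p.toReal + g x ^ p.toReal) / 2)) ∂μ := by
        exact lintegral_mono fun x => hC (f x) (g x)
    _ = _ := by
        rw [lintegral_add_left (by fun_prop), lintegral_const_mul _ (by fun_prop),
          lintegral_const_mul _ (by fun_prop)]
        simp only [div_eq_mul_inv]
        rw [lintegral_mul_const _ (by fun_prop), lintegral_add_left (by fun_prop)]

theorem tendsto_eLpNorm_tsub_zero (hp1 : 1 < p) (hp : p ≠ ⊤) {l : Filter ι}
    {f g : ι → α → ℝ≥0∞} (hf : ∀ i, Measurable (f i)) (hg : ∀ i, Measurable (g i))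
    {m : ℝ≥0∞} (hm : m ≠ ⊤) (hfm : Tendsto (fun i => eLpNorm (f i) p μ) l (𝓝 m))
    (hgm : Tendsto (fun i => eLpNorm (g i) p μ) l (𝓝 m))
    (hmid : Tendsto (fun i => eLpNorm ((2⁻¹ : ℝ≥0) • (f i + g i)) p μ) l (𝓝 m)) :
    Tendsto (fun i => eLpNorm (g i - f i) p μ) l (𝓝 0) := by
  have hq : 0 < p.toReal := toReal_pos (zero_lt_one.trans hp1).ne' hp
  have hmq : m ^ p.toReal ≠ ⊤ := (ENNReal.rpow_lt_top_of_nonneg hq.le hm).ne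
  suffices h : Tendsto (fun i => eLpNorm (g i - f i) p μ ^ p.toReal) l (𝓝 0) by
    simpa [hq.ne', hq] using h.ennrpow_const p.toReal⁻¹
  refine ENNReal.tendsto_nhds_zero.2 fun η hη => ?_
  obtain ⟨ε, hε, hεη⟩ := ENNReal.exists_nnreal_pos_mul_lt hmq hη.ne'
  obtain ⟨C, hC⟩ := exists_eLpNorm_tsub_rpow_add_le (μ := μ) hp1 hp hε
  have hbound : Tendsto (fun i =>
      ε * eLpNorm ((2⁻¹ : ℝ≥0) • (f i + g i)) p μ ^ p.toReal +
        C * ((eLpNorm (f i) p μ ^ p.toReal + eLpNorm (g i) p μ ^ p.toReal) / 2) -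
        C * eLpNorm ((2⁻¹ : ℝ≥0) • (f i + g i)) p μ ^ p.toReal) l (𝓝 (ε * m ^ p.toReal)) := by
    have hlim := ENNReal.Tendsto.sub
      ((ENNReal.Tendsto.const_mul (hmid.ennrpow_const p.toReal) (.inr (coe_ne_top (r := ε)))).add
        (ENNReal.Tendsto.const_mul (ENNReal.Tendsto.div_const
          ((hfm.ennrpow_const p.toReal).add (hgm.ennrpow_const p.toReal)) (.inr two_ne_zero))
          (.inr (coe_ne_top (r := C)))))
      (ENNReal.Tendsto.const_mul (hmid.ennrpow_const p.toReal) (.inr (coe_ne_top (r := C))))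
      (.inr (mul_ne_top coe_ne_top hmq))
    rwa [ENNReal.add_div, ENNReal.add_halves,
      ENNReal.add_sub_cancel_right (mul_ne_top coe_ne_top hmq)] at hlim
  filter_upwards [hbound.eventually_le_const hεη,
    (hmid.ennrpow_const p.toReal).eventually_ne hmq] with i hi hfin
  exact (ENNReal.le_sub_of_add_le_right (mul_ne_top coe_ne_top hfin)
    (hC (f i) (g i) (hf i) (hg i))).trans hi

theorem eLpNorm_iSup_of_monotone (hp0 : p ≠ 0) (hp : p ≠ ⊤) {f : ℕ → α → ℝ≥0∞}
    (hf : ∀ n, Measurable (f n)) (hmono : Monotone f) :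
    eLpNorm (fun x => ⨆ n, f n x) p μ = ⨆ n, eLpNorm (f n) p μ := by
  have hq : 0 < p.toReal := toReal_pos hp0 hp
  have hiSup {u : ℕ → ℝ≥0∞} {r : ℝ} (hr : 0 < r) : (⨆ n, u n) ^ r = ⨆ n, u n ^ r :=
    (ENNReal.orderIsoRpow r hr).map_iSup u
  simp_rw [eLpNorm_eq_lintegral_rpow_enorm_toReal hp0 hp, enorm_eq_self, hiSup hq]
  rw [lintegral_iSup (fun n => (hf n).pow_const _)
    fun m n hmn x => ENNReal.rpow_le_rpow (hmono hmn x) hq.le, hiSup (one_div_pos.2 hq)]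

theorem le_add_sum_range_tsub {M : Type*} [AddCommMonoid M] [Preorder M] [AddLeftMono M] [Sub M]
    [OrderedSub M] (f : ℕ → M) (n : ℕ) :
    f n ≤ f 0 + ∑ k ∈ Finset.range n, (f (k + 1) - f k) := by
  induction n with
  | zero => simp
  | succ n ih =>
    calc f (n + 1) ≤ f n + (f (n + 1) - f n) := le_add_tsub
      _ ≤ f 0 + ∑ k ∈ Finset.range n, (f (k + 1) - f k) + (f (n + 1) - f n) := by gcongr
      _ = f 0 + ∑ k ∈ Finset.range (n + 1), (f (k + 1) - f k) := by
        rw [Finset.sum_range_succ, add_assoc]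

theorem eLpNorm_iSup_le_add_tsum (hp1 : 1 ≤ p) (hp : p ≠ ⊤) {f : ℕ → α → ℝ≥0∞}
    (hf : ∀ n, Measurable (f n)) :
    eLpNorm (fun x => ⨆ n, f n x) p μ ≤
      eLpNorm (f 0) p μ + ∑' n, eLpNorm (f (n + 1) - f n) p μ := by
  set S : ℕ → α → ℝ≥0∞ := fun n => f 0 + ∑ k ∈ Finset.range n, (f (k + 1) - f k) with hS
  have hsub_meas (n : ℕ) : Measurable (f (n + 1) - f n) := (hf (n + 1)).sub (hf n)
  have hsum_meas (n : ℕ) : Measurable (∑ k ∈ Finset.range n, (f (k + 1) - f k)) :=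
    Finset.sum_induction _ _ (fun _ _ => Measurable.add) measurable_zero fun k _ => hsub_meas k
  have hS_mono : Monotone S := monotone_nat_of_le_succ fun n => by
    simp only [hS, Finset.sum_range_succ, ← add_assoc]
    exact le_self_add
  calc eLpNorm (fun x => ⨆ n, f n x) p μ
      ≤ eLpNorm (fun x => ⨆ n, S n x) p μ :=
        eLpNorm_mono_enorm fun x => iSup_mono fun n => le_add_sum_range_tsub f n x
    _ = ⨆ n, eLpNorm (S n) p μ := eLpNorm_iSup_of_monotone (zero_lt_one.trans_le hp1).ne' hp
        (fun n => (hf 0).add (hsum_meas n)) hS_mono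
    _ ≤ _ := iSup_le fun n => ?_
  calc eLpNorm (S n) p μ
      ≤ eLpNorm (f 0) p μ + eLpNorm (∑ k ∈ Finset.range n, (f (k + 1) - f k)) p μ :=
        eLpNorm_add_le (hf 0).aestronglyMeasurable (hsum_meas n).aestronglyMeasurable hp1
    _ ≤ eLpNorm (f 0) p μ + ∑ k ∈ Finset.range n, eLpNorm (f (k + 1) - f k) p μ := by
        gcongr
        exact eLpNorm_sum_le (fun k _ => (hsub_meas k).aestronglyMeasurable) hp1
    _ ≤ _ := by
        gcongr
        exact ENNReal.sum_le_tsum _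

end LpFunctions

section ZiemerConvergence

variable {α : Type*} [MeasurableSpace α]

/-- A convex class of nonnegative measurable functions that contains, along with any function,
every larger measurable function: the properties of the admissible functions of a family of
measures on which Ziemer's convergence theorem for moduli rests. -/
structure IsAdmissibleClass (𝒜 : Set (α → ℝ≥0∞)) : Prop where
  measurable : ∀ ρ ∈ 𝒜, Measurable ρ
  convex : Convex ℝ≥0 𝒜
  mem_of_le : ∀ ρ ∈ 𝒜, ∀ ρ', Measurable ρ' → ρ ≤ ρ' → ρ' ∈ 𝒜

variable {μ : Measure α} {p : ℝ≥0∞}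

theorem eLpNorm_midpoint_le (hp1 : 1 ≤ p) {f g : α → ℝ≥0∞} (hf : Measurable f)
    (hg : Measurable g) :
    eLpNorm ((2⁻¹ : ℝ≥0) • (f + g)) p μ ≤ (eLpNorm f p μ + eLpNorm g p μ) / 2 :=
  calc eLpNorm ((2⁻¹ : ℝ≥0) • (f + g)) p μ
      ≤ (2⁻¹ : ℝ≥0) • eLpNorm (f + g) p μ :=
        eLpNorm_le_nnreal_smul_eLpNorm_of_ae_le_mul' (.of_forall fun _ => le_rfl) p
    _ ≤ (2⁻¹ : ℝ≥0) • (eLpNorm f p μ + eLpNorm g p μ) := by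
        gcongr
        exact eLpNorm_add_le hf.aestronglyMeasurable hg.aestronglyMeasurable hp1
    _ = (eLpNorm f p μ + eLpNorm g p μ) / 2 := by
        rw [ENNReal.smul_def, smul_eq_mul, ENNReal.coe_inv two_ne_zero, mul_comm, div_eq_mul_inv]
        rfl

theorem exists_seq_mem_tendsto_iInf {β : Type*} (F : β → ℝ≥0∞) {𝒜 : ℕ → Set β} {m : ℝ≥0∞}
    (hm : m ≠ ⊤) (hle : ∀ n, ⨅ b ∈ 𝒜 n, F b ≤ m)
    (hlim : Tendsto (fun n => ⨅ b ∈ 𝒜 n, F b) atTop (𝓝 m)) :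
    ∃ b : ℕ → β, (∀ n, b n ∈ 𝒜 n) ∧ Tendsto (fun n => F (b n)) atTop (𝓝 m) := by
  have hex (n : ℕ) : ∃ b ∈ 𝒜 n, F b < (⨅ b ∈ 𝒜 n, F b) + ((n : ℝ≥0∞) + 1)⁻¹ := by
    simpa only [iInf_lt_iff, exists_prop] using
      ENNReal.lt_add_right (ne_top_of_le_ne_top hm (hle n))
        (ENNReal.inv_ne_zero.2 (by finiteness : (n : ℝ≥0∞) + 1 ≠ ⊤))
  choose b hb𝒜 hb using hex
  have hinv : Tendsto (fun n : ℕ => ((n : ℝ≥0∞) + 1)⁻¹) atTop (𝓝 0) := by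
    exact_mod_cast ENNReal.tendsto_inv_nat_nhds_zero.comp (tendsto_add_atTop_nat 1)
  exact ⟨b, hb𝒜, tendsto_of_tendsto_of_tendsto_of_le_of_le hlim
    (by simpa only [add_zero] using hlim.add hinv) (fun n => biInf_le F (hb𝒜 n))
    fun n => (hb n).le⟩

theorem tendsto_eLpNorm_tsub_zero_of_tendsto_iInf (hp1 : 1 < p) (hp : p ≠ ⊤)
    {𝒜 : ℕ → Set (α → ℝ≥0∞)} (h𝒜 : ∀ n, Convex ℝ≥0 (𝒜 n)) (hanti : Antitone 𝒜)
    {ρ : ℕ → α → ℝ≥0∞} (hρ : ∀ n, Measurable (ρ n)) (hρ𝒜 : ∀ n, ρ n ∈ 𝒜 n)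
    {m : ℝ≥0∞} (hm : m ≠ ⊤)
    (hlim : Tendsto (fun n => ⨅ ρ ∈ 𝒜 n, eLpNorm ρ p μ) atTop (𝓝 m))
    (hρm : Tendsto (fun n => eLpNorm (ρ n) p μ) atTop (𝓝 m))
    {ι : Type*} {l : Filter ι} {u v : ι → ℕ} (hu : Tendsto u l atTop) (hv : Tendsto v l atTop)
    (huv : ∀ᶠ i in l, u i ≤ v i) :
    Tendsto (fun i => eLpNorm (ρ (v i) - ρ (u i)) p μ) l (𝓝 0) := by
  have hmem : ∀ᶠ i in l, (2⁻¹ : ℝ≥0) • (ρ (u i) + ρ (v i)) ∈ 𝒜 (u i) := by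
    filter_upwards [huv] with i hi
    rw [smul_add]
    exact h𝒜 (u i) (hρ𝒜 (u i)) (hanti hi (hρ𝒜 (v i))) zero_le zero_le
      (by rw [← two_mul, mul_inv_cancel₀ two_ne_zero])
  have havg : Tendsto (fun i => (eLpNorm (ρ (u i)) p μ + eLpNorm (ρ (v i)) p μ) / 2) l (𝓝 m) := by
    have h := ENNReal.Tendsto.div_const ((hρm.comp hu).add (hρm.comp hv)) (.inr two_ne_zero)
    rwa [ENNReal.add_div, ENNReal.add_halves] at h
  exact tendsto_eLpNorm_tsub_zero hp1 hp (fun i => hρ (u i)) (fun i => hρ (v i)) hm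
    (hρm.comp hu) (hρm.comp hv) <| tendsto_of_tendsto_of_tendsto_of_le_of_le'
      (hlim.comp hu) havg (hmem.mono fun i hi => biInf_le _ hi)
      (.of_forall fun i => eLpNorm_midpoint_le hp1.le (hρ (u i)) (hρ (v i)))

theorem eventually_forall_ge_le_of_tendsto_zero {d : ℕ → ℕ → ℝ≥0∞}
    (hd : Tendsto (fun i : ℕ × ℕ => d i.1 i.2) (atTop ⊓ 𝓟 {i | i.1 ≤ i.2}) (𝓝 0))
    {ε : ℝ≥0∞} (hε : 0 < ε) :
    ∀ᶠ n in atTop, ∀ j ≥ n, d n j ≤ ε := by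
  obtain ⟨N, hN⟩ := eventually_atTop_prod_self.1
    (eventually_inf_principal.1 (ENNReal.tendsto_nhds_zero.1 hd ε hε))
  filter_upwards [eventually_ge_atTop N] with n hn j hj using hN n j hn (hn.trans hj) hj

theorem exists_strictMono_tsum_le {d : ℕ → ℕ → ℝ≥0∞}
    (hd : Tendsto (fun i : ℕ × ℕ => d i.1 i.2) (atTop ⊓ 𝓟 {i | i.1 ≤ i.2}) (𝓝 0))
    {ε : ℝ≥0∞} (hε : 0 < ε) (N : ℕ) :
    ∃ φ : ℕ → ℕ, StrictMono φ ∧ N ≤ φ 0 ∧ ∑' k, d (φ k) (φ (k + 1)) ≤ ε := by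
  obtain ⟨η, hη, hηε⟩ := ENNReal.exists_pos_sum_of_countable' hε.ne' ℕ
  obtain ⟨φ, hφ, hφd⟩ := extraction_forall_of_eventually fun k =>
    (eventually_forall_ge_le_of_tendsto_zero hd (hη k)).and (eventually_ge_atTop N)
  exact ⟨φ, hφ, (hφd 0).2,
    (ENNReal.tsum_le_tsum fun k => (hφd k).1 _ (hφ.monotone k.le_succ)).trans hηε.le⟩

theorem exists_mem_iInter_eLpNorm_le (hp1 : 1 < p) (hp : p ≠ ⊤) {𝒜 : ℕ → Set (α → ℝ≥0∞)}
    (h𝒜 : ∀ n, IsAdmissibleClass (𝒜 n)) (hanti : Antitone 𝒜) {m : ℝ≥0∞} (hm : m ≠ ⊤)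
    (hle : ∀ n, ⨅ ρ ∈ 𝒜 n, eLpNorm ρ p μ ≤ m)
    (hlim : Tendsto (fun n => ⨅ ρ ∈ 𝒜 n, eLpNorm ρ p μ) atTop (𝓝 m)) {ε : ℝ≥0∞} (hε : 0 < ε) :
    ∃ ρ ∈ ⋂ n, 𝒜 n, eLpNorm ρ p μ ≤ m + ε := by
  have hε2 : 0 < ε / 2 := ENNReal.half_pos hε.ne'
  obtain ⟨ρ, hρ𝒜, hρm⟩ := exists_seq_mem_tendsto_iInf (eLpNorm · p μ) hm hle hlim
  have hρ (n : ℕ) : Measurable (ρ n) := (h𝒜 n).measurable _ (hρ𝒜 n)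
  obtain ⟨N, hN⟩ := eventually_atTop.1
    (hρm.eventually_le_const (ENNReal.lt_add_right hm hε2.ne'))
  have hcauchy : Tendsto (fun i : ℕ × ℕ => eLpNorm (ρ i.2 - ρ i.1) p μ)
      (atTop ⊓ 𝓟 {i | i.1 ≤ i.2}) (𝓝 0) :=
    tendsto_eLpNorm_tsub_zero_of_tendsto_iInf hp1 hp (fun n => (h𝒜 n).convex) hanti hρ hρ𝒜 hm
      hlim hρm ((tendsto_fst.mono_left prod_atTop_atTop_eq.ge).mono_left inf_le_left)
      ((tendsto_snd.mono_left prod_atTop_atTop_eq.ge).mono_left inf_le_left)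
      (mem_inf_of_right (mem_principal_self _))
  obtain ⟨φ, hφ, hNφ, hsum⟩ := exists_strictMono_tsum_le
    (d := fun i j => eLpNorm (ρ j - ρ i) p μ) hcauchy hε2 N
  refine ⟨fun x => ⨆ k, ρ (φ k) x, mem_iInter.2 fun n => ?_, ?_⟩
  · exact (h𝒜 n).mem_of_le _ (hanti hφ.le_apply (hρ𝒜 (φ n))) _
      (.iSup fun k => hρ (φ k)) fun x => le_iSup (fun k => ρ (φ k) x) n
  · calc eLpNorm (fun x => ⨆ k, ρ (φ k) x) p μ
        ≤ eLpNorm (ρ (φ 0)) p μ + ∑' k, eLpNorm (ρ (φ (k + 1)) - ρ (φ k)) p μ :=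
          eLpNorm_iSup_le_add_tsum hp1.le hp fun k => hρ (φ k)
      _ ≤ m + ε / 2 + ε / 2 := add_le_add (hN _ hNφ) hsum
      _ = m + ε := by rw [add_assoc, ENNReal.add_halves]

theorem tendsto_iInf_eLpNorm_of_antitone (hp1 : 1 < p) (hp : p ≠ ⊤)
    {𝒜 : ℕ → Set (α → ℝ≥0∞)} (h𝒜 : ∀ n, IsAdmissibleClass (𝒜 n)) (hanti : Antitone 𝒜) :
    Tendsto (fun n => ⨅ ρ ∈ 𝒜 n, eLpNorm ρ p μ) atTop
      (𝓝 (⨅ ρ ∈ ⋂ n, 𝒜 n, eLpNorm ρ p μ)) := by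
  have hlim := tendsto_atTop_iSup (f := fun n => ⨅ ρ ∈ 𝒜 n, eLpNorm ρ p μ)
    fun m n hmn => biInf_mono (hanti hmn)
  suffices h : ⨆ n, ⨅ ρ ∈ 𝒜 n, eLpNorm ρ p μ = ⨅ ρ ∈ ⋂ n, 𝒜 n, eLpNorm ρ p μ by rwa [← h]
  refine le_antisymm (iSup_le fun n => biInf_mono (iInter_subset 𝒜 n)) ?_
  rcases eq_or_ne (⨆ n, ⨅ ρ ∈ 𝒜 n, eLpNorm ρ p μ) ⊤ with htop | hm
  · exact htop ▸ le_top
  refine ENNReal.le_of_forall_pos_le_add fun ε hε _ => ?_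
  obtain ⟨ρ, hρ, hρε⟩ := exists_mem_iInter_eLpNorm_le hp1 hp h𝒜 hanti hm
    (le_iSup fun n => ⨅ ρ ∈ 𝒜 n, eLpNorm ρ p μ) hlim (ENNReal.coe_pos.2 hε)
  exact (biInf_le _ hρ).trans hρε

end ZiemerConvergence

section CodimOneHausdorff

section PseudoMetric

variable {X : Type*} [PseudoMetricSpace X] [MeasurableSpace X] {μ : Measure X}

/-- The cost of covering `s` by a single ball of radius at most `δ`, from which the codimension-1
spherical Hausdorff measure arises by Carathéodory's construction. -/
noncomputable def codimOneGauge (μ : Measure X) (δ : ℝ) (s : Set X) : ℝ≥0∞ :=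
  ⨅ (x : X) (r : ℝ) (_ : s ⊆ ball x r) (_ : 0 < r ∧ r ≤ δ), μ (ball x r) / ENNReal.ofReal r

/-- The outer measure generated by the gauges `codimOneGauge μ δ` as `δ → 0`. It forces the value
`0` on the empty set, so it agrees with `codimOneHausdorff μ` only if the latter does so too. -/
noncomputable def codimOneOuterMeasure (μ : Measure X) : OuterMeasure X :=
  ⨆ δ : Ioi (0 : ℝ), OuterMeasure.boundedBy (codimOneGauge μ δ)

theorem codimOneGauge_le {δ : ℝ} {s : Set X} {x : X} {r : ℝ} (hs : s ⊆ ball x r)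
    (hr : 0 < r ∧ r ≤ δ) : codimOneGauge μ δ s ≤ μ (ball x r) / ENNReal.ofReal r :=
  iInf_le_of_le x <| iInf_le_of_le r <| iInf_le_of_le hs <| iInf_le_of_le hr le_rfl

theorem codimOneGauge_antitone : Antitone (codimOneGauge μ) := fun _ _ hδ _ =>
  le_iInf₂ fun _ _ => le_iInf₂ fun hs hr => codimOneGauge_le hs ⟨hr.1, hr.2.trans hδ⟩

theorem codimOneGauge_eq_top {δ : ℝ} {s : Set X} {x y : X} (hx : x ∈ s) (hy : y ∈ s)
    (hxy : 2 * δ ≤ dist x y) : codimOneGauge μ δ s = ⊤ := by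
  refine top_unique <| le_iInf₂ fun c r => le_iInf₂ fun hs hr => absurd hxy ?_
  linarith [dist_triangle_right x y c, mem_ball.1 (hs hx), mem_ball.1 (hs hy)]

theorem boundedBy_codimOneGauge_union {δ : ℝ} {s t : Set X}
    (hst : ∀ x ∈ s, ∀ y ∈ t, 2 * δ ≤ dist x y) :
    OuterMeasure.boundedBy (codimOneGauge μ δ) (s ∪ t) =
      OuterMeasure.boundedBy (codimOneGauge μ δ) s +
        OuterMeasure.boundedBy (codimOneGauge μ δ) t :=
  OuterMeasure.boundedBy_union_of_top_of_nonempty_inter fun _ ⟨x, hxs, hxu⟩ ⟨y, hyt, hyu⟩ =>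
    codimOneGauge_eq_top hxu hyu (hst x hxs y hyt)

theorem tendsto_boundedBy_codimOneGauge (s : Set X) :
    Tendsto (fun δ : Ioi (0 : ℝ) => OuterMeasure.boundedBy (codimOneGauge μ δ) s) atBot
      (𝓝 (codimOneOuterMeasure μ s)) := by
  rw [codimOneOuterMeasure, OuterMeasure.iSup_apply]
  exact tendsto_atBot_iSup fun δ δ' hδ =>
    OuterMeasure.le_boundedBy.2 (fun t => (OuterMeasure.boundedBy_le t).trans
      (codimOneGauge_antitone hδ t)) s

theorem codimOneGauge_empty_eq_zero {A : Set X}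
    (hA : codimOneHausdorff μ A ≠ ⊤) {δ : ℝ} (hδ : 0 < δ) : codimOneGauge μ δ ∅ = 0 := by
  contrapose! hA
  refine top_unique <| le_iSup₂_of_le δ hδ <| le_iInf₂ fun c r => le_iInf₂ fun _ hr => ?_
  rw [← ENNReal.tsum_const_eq_top_of_ne_zero (α := ℕ) hA]
  exact ENNReal.tsum_le_tsum fun i => codimOneGauge_le (empty_subset _) (hr i)

theorem exists_ball_le_codimOneGauge_add {δ : ℝ} {s : Set X} (hs : codimOneGauge μ δ s ≠ ⊤)
    {ε : ℝ≥0∞} (hε : 0 < ε) :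
    ∃ x r, s ⊆ ball x r ∧ (0 < r ∧ r ≤ δ) ∧
      μ (ball x r) / ENNReal.ofReal r ≤ codimOneGauge μ δ s + ε := by
  have h := ENNReal.lt_add_right hs hε.ne'
  conv_lhs at h => unfold codimOneGauge
  simp only [iInf_lt_iff] at h
  obtain ⟨x, r, hsub, hr, hlt⟩ := h
  exact ⟨x, r, hsub, hr, hlt.le⟩

theorem boundedBy_codimOneGauge_apply {δ : ℝ} (h0 : codimOneGauge μ δ ∅ = 0) (A : Set X) :
    OuterMeasure.boundedBy (codimOneGauge μ δ) A =
      ⨅ (c : ℕ → X) (r : ℕ → ℝ) (_ : A ⊆ ⋃ i, ball (c i) (r i)) (_ : ∀ i, 0 < r i ∧ r i ≤ δ),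
        ∑' i, μ (ball (c i) (r i)) / ENNReal.ofReal (r i) := by
  rw [OuterMeasure.boundedBy_eq_ofFunction h0, OuterMeasure.ofFunction_apply]
  refine le_antisymm (le_iInf₂ fun c r => le_iInf₂ fun hA hr => ?_)
    (le_iInf₂ fun t ht => ENNReal.le_of_forall_pos_le_add fun ε hε hfin => ?_)
  · exact iInf₂_le_of_le (fun i => ball (c i) (r i)) hA
      (ENNReal.tsum_le_tsum fun i => codimOneGauge_le subset_rfl (hr i))
  obtain ⟨η, hη, hηε⟩ := ENNReal.exists_pos_sum_of_countable' (ENNReal.coe_pos.2 hε).ne' ℕ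
  choose c r hsub hr hle using fun i => exists_ball_le_codimOneGauge_add
    (ne_top_of_le_ne_top hfin.ne (ENNReal.le_tsum i)) (hη i)
  refine iInf₂_le_of_le c r <| iInf₂_le_of_le (ht.trans (iUnion_mono hsub)) hr ?_
  calc ∑' i, μ (ball (c i) (r i)) / ENNReal.ofReal (r i)
      ≤ ∑' i, (codimOneGauge μ δ (t i) + η i) := ENNReal.tsum_le_tsum hle
    _ ≤ ∑' i, codimOneGauge μ δ (t i) + ε := by
        rw [ENNReal.tsum_add]
        gcongr

-- Covers are indexed by `ℕ` and consist of genuine balls, so `codimOneHausdorff μ ∅ = ⊤` can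
-- happen, e.g. if `X` is a point of positive mass; finiteness on a single set excludes this.
theorem codimOneOuterMeasure_apply {A : Set X} (hA : codimOneHausdorff μ A ≠ ⊤) (B : Set X) :
    codimOneOuterMeasure μ B = codimOneHausdorff μ B := by
  rw [codimOneOuterMeasure, OuterMeasure.iSup_apply, codimOneHausdorff, iSup_subtype']
  exact iSup_congr fun δ => boundedBy_codimOneGauge_apply
    (codimOneGauge_empty_eq_zero hA δ.2) B

theorem codimOneHausdorff_mono {A B : Set X} (h : A ⊆ B) :
    codimOneHausdorff μ A ≤ codimOneHausdorff μ B :=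
  iSup₂_mono fun _ _ => le_iInf₂ fun c r => le_iInf₂ fun hB hr =>
    iInf₂_le_of_le c r <| iInf₂_le_of_le (h.trans hB) hr le_rfl

theorem codimIntegral_mono {A : Set X} {f g : X → ℝ≥0∞} (h : f ≤ g) :
    codimIntegral μ A f ≤ codimIntegral μ A g :=
  lintegral_mono fun _ => codimOneHausdorff_mono <|
    inter_subset_inter_right A fun x hx => lt_of_lt_of_le hx (h x)

end PseudoMetric

theorem volume_Ioi_zero_inter_ofReal_lt (a : ℝ≥0∞) :
    volume (Ioi (0 : ℝ) ∩ {s | ENNReal.ofReal s < a}) = a := by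
  rcases eq_or_ne a ⊤ with rfl | ha
  · simp
  · lift a to ℝ≥0 using ha
    have : Ioi (0 : ℝ) ∩ {s | ENNReal.ofReal s < a} = Ioo 0 (a : ℝ) := by
      ext s
      refine and_congr_right fun hs => ?_
      rw [mem_ofPred_eq, ENNReal.ofReal_lt_coe_iff (le_of_lt hs)]
    rw [this, Real.volume_Ioo, sub_zero, ENNReal.ofReal_coe_nnreal]

theorem lintegral_Ioi_measure_ofReal_lt {α : Type*} [MeasurableSpace α] (ν : Measure α)
    [SFinite ν] {g : α → ℝ≥0∞} (hg : Measurable g) :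
    ∫⁻ s in Ioi (0 : ℝ), ν {x | ENNReal.ofReal s < g x} = ∫⁻ x, g x ∂ν := by
  have hmeas : MeasurableSet {z : ℝ × α | ENNReal.ofReal z.1 < g z.2} :=
    measurableSet_lt (ENNReal.measurable_ofReal.comp measurable_fst) (hg.comp measurable_snd)
  calc ∫⁻ s in Ioi (0 : ℝ), ν {x | ENNReal.ofReal s < g x}
      = ((volume.restrict (Ioi 0)).prod ν) {z | ENNReal.ofReal z.1 < g z.2} :=
        (Measure.prod_apply hmeas).symm
    _ = ∫⁻ x, volume.restrict (Ioi 0) {s : ℝ | ENNReal.ofReal s < g x} ∂ν :=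
        Measure.prod_apply_symm hmeas
    _ = ∫⁻ x, g x ∂ν := lintegral_congr fun x => by
        rw [Measure.restrict_apply' measurableSet_Ioi, inter_comm,
          volume_Ioi_zero_inter_ofReal_lt]

variable {X : Type*} [MetricSpace X] [MeasurableSpace X] {μ : Measure X}

theorem isMetric_codimOneOuterMeasure : (codimOneOuterMeasure μ).IsMetric := by
  rintro s t ⟨r, hr0, hr⟩
  obtain ⟨δ₀, hδ₀, hδ₀r⟩ := ENNReal.exists_nnreal_pos_mul_lt (ENNReal.ofNat_ne_top (n := 2)) hr0
  refine tendsto_nhds_unique_of_eventuallyEq (tendsto_boundedBy_codimOneGauge (s ∪ t))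
    ((tendsto_boundedBy_codimOneGauge s).add (tendsto_boundedBy_codimOneGauge t)) ?_
  filter_upwards [eventually_le_atBot (⟨δ₀, hδ₀⟩ : Ioi (0 : ℝ))] with δ hδ
  refine boundedBy_codimOneGauge_union fun x hx y hy => ?_
  have hxy : ((δ₀ * 2 : ℝ≥0) : ℝ≥0∞) < edist x y := by
    exact_mod_cast hδ₀r.trans_le (hr x hx y hy)
  rw [edist_nndist, ENNReal.coe_lt_coe, ← NNReal.coe_lt_coe, coe_nndist, NNReal.coe_mul,
    NNReal.coe_ofNat] at hxy
  linarith [show (δ : ℝ) ≤ δ₀ from hδ]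

variable [BorelSpace X]

/-- The codimension-1 spherical Hausdorff measure as a Borel measure. -/
noncomputable def codimOneMeasure (μ : Measure X) : Measure X :=
  (codimOneOuterMeasure μ).toMeasure isMetric_codimOneOuterMeasure.le_caratheodory

theorem codimOneMeasure_apply {A B : Set X} (hA : codimOneHausdorff μ A ≠ ⊤)
    (hB : MeasurableSet B) : codimOneMeasure μ B = codimOneHausdorff μ B := by
  rw [codimOneMeasure, toMeasure_apply _ _ hB, codimOneOuterMeasure_apply hA]

theorem codimIntegral_eq_setLIntegral {A : Set X} (hA : MeasurableSet A)
    (hAfin : codimOneHausdorff μ A ≠ ⊤) {g : X → ℝ≥0∞} (hg : Measurable g) :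
    codimIntegral μ A g = ∫⁻ x in A, g x ∂(codimOneMeasure μ) := by
  have : IsFiniteMeasure ((codimOneMeasure μ).restrict A) :=
    isFiniteMeasure_restrict.2 (by rwa [codimOneMeasure_apply hAfin hA])
  rw [← lintegral_Ioi_measure_ofReal_lt _ hg]
  refine lintegral_congr fun s => ?_
  have hs : MeasurableSet {x | ENNReal.ofReal s < g x} := measurableSet_lt measurable_const hg
  rw [Measure.restrict_apply' hA, inter_comm, codimOneMeasure_apply hAfin (hs.inter hA)]

end CodimOneHausdorff

section SurfaceModulus

theorem SeparatesIn.disjoint {X : Type*} [TopologicalSpace X] {S E F G : Set X}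
    (h : SeparatesIn S E F G) : Disjoint S (E ∪ F) := by
  obtain ⟨x, -, y, -, hE, hF, -⟩ := h
  refine disjoint_right.2 fun z hz => ?_
  rcases hz with hz | hz
  · exact (connectedComponentIn_subset _ _ (hE hz)).2
  · exact (connectedComponentIn_subset _ _ (hF hz)).2

variable {X : Type*} [MeasurableSpace X]

section PseudoMetric

variable [PseudoMetricSpace X] {μ : Measure X} {G : Set X}

/-- The functions admissible for the surface family `𝒮` in `G`, over which `surfModulus` takes
its infimum. -/
def surfAdmissible (μ : Measure X) (𝒮 : Set (Set X)) (G : Set X) : Set (X → ℝ≥0∞) :=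
  {ρ | Measurable ρ ∧ ∀ S ∈ 𝒮, 1 ≤ codimIntegral μ (S ∩ G) ρ}

/-- The truncation `Γ*_δ(E, F; G)` of `surfaceSets μ E F G`. For compact nonempty `S` and `E ∪ F`
the pointwise condition says `dist(S, E ∪ F) > δ`, as the distance is attained. -/
def farSurfaceSets (μ : Measure X) (E F G : Set X) (δ : ℝ) : Set (Set X) :=
  {S ∈ surfaceSets μ E F G | ∀ x ∈ S, ∀ y ∈ E ∪ F, δ < dist x y}

theorem surfAdmissible_anti {𝒮 𝒯 : Set (Set X)} (h : 𝒮 ⊆ 𝒯) :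
    surfAdmissible μ 𝒯 G ⊆ surfAdmissible μ 𝒮 G :=
  fun _ hρ => ⟨hρ.1, fun S hS => hρ.2 S (h hS)⟩

theorem iInter_surfAdmissible {ι : Type*} [Nonempty ι] (𝒮 : ι → Set (Set X)) :
    ⋂ i, surfAdmissible μ (𝒮 i) G = surfAdmissible μ (⋃ i, 𝒮 i) G := by
  ext ρ
  simp only [surfAdmissible, mem_iInter, mem_ofPred_eq, mem_iUnion, forall_and, forall_const,
    forall_exists_index]
  rw [forall_comm]

theorem surfModulus_eq_iInf_eLpNorm_rpow {q : ℝ} (hq : 0 < q) (𝒮 : Set (Set X)) :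
    surfModulus μ q 𝒮 G =
      (⨅ ρ ∈ surfAdmissible μ 𝒮 G, eLpNorm ρ (ENNReal.ofReal q) μ) ^ q := by
  have hpow (ρ : X → ℝ≥0∞) : eLpNorm ρ (ENNReal.ofReal q) μ ^ q = ∫⁻ x, ρ x ^ q ∂μ := by
    simpa only [ENNReal.toReal_ofReal hq.le] using
      eLpNorm_rpow_toReal_eq_lintegral (ENNReal.ofReal_pos.2 hq).ne' ENNReal.ofReal_ne_top ρ
  calc surfModulus μ q 𝒮 G
      = ⨅ ρ ∈ surfAdmissible μ 𝒮 G, eLpNorm ρ (ENNReal.ofReal q) μ ^ q := by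
        simp only [hpow]; rfl
    _ = (⨅ ρ ∈ surfAdmissible μ 𝒮 G, eLpNorm ρ (ENNReal.ofReal q) μ) ^ q :=
        ((ENNReal.orderIsoRpow q hq).map_iInf₂ _).symm

theorem farSurfaceSets_antitone {E F : Set X} : Antitone (farSurfaceSets μ E F G) :=
  fun _ _ h _ hS => ⟨hS.1, fun x hx y hy => h.trans_lt (hS.2 x hx y hy)⟩

theorem iUnion_farSurfaceSets {E F : Set X} (hE : IsClosed E) (hF : IsClosed F) :
    ⋃ n : ℕ, farSurfaceSets μ E F G (1 / ((n + 1 : ℕ) : ℝ)) = surfaceSets μ E F G := by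
  refine Subset.antisymm (iUnion_subset fun n S hS => hS.1) fun S hS => ?_
  obtain ⟨r, hr0, hr⟩ :=
    Metric.exists_pos_forall_lt_edist hS.1 (hE.union hF) hS.2.2.2.disjoint
  obtain ⟨n, hn⟩ := exists_nat_one_div_lt (NNReal.coe_pos.2 hr0)
  refine mem_iUnion.2 ⟨n, hS, fun x hx y hy => ?_⟩
  calc 1 / ((n + 1 : ℕ) : ℝ) < r := by exact_mod_cast hn
    _ < dist x y := by exact_mod_cast edist_nndist x y ▸ hr x hx y hy

end PseudoMetric

variable [MetricSpace X] [BorelSpace X] {μ : Measure X} {G E F : Set X}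

theorem isAdmissibleClass_surfAdmissible {𝒮 : Set (Set X)}
    (hmeas : ∀ S ∈ 𝒮, MeasurableSet (S ∩ G)) (hfin : ∀ S ∈ 𝒮, codimOneHausdorff μ (S ∩ G) ≠ ⊤) :
    IsAdmissibleClass (surfAdmissible μ 𝒮 G) where
  measurable _ hρ := hρ.1
  convex := by
    rintro f ⟨hf, hf1⟩ g ⟨hg, hg1⟩ a b - - hab
    have hfg : Measurable (a • f + b • g) := (hf.const_smul a).add (hg.const_smul b)
    refine ⟨hfg, fun S hS => ?_⟩
    rw [codimIntegral_eq_setLIntegral (hmeas S hS) (hfin S hS) hfg]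
    calc 1 = (a : ℝ≥0∞) * 1 + b * 1 := by simpa using (congrArg ((↑) : ℝ≥0 → ℝ≥0∞) hab).symm
      _ ≤ a * codimIntegral μ (S ∩ G) f + b * codimIntegral μ (S ∩ G) g := by
          gcongr
          exacts [hf1 S hS, hg1 S hS]
      _ = ∫⁻ x in S ∩ G, (a * f x + b * g x) ∂(codimOneMeasure μ) := by
          rw [codimIntegral_eq_setLIntegral (hmeas S hS) (hfin S hS) hf,
            codimIntegral_eq_setLIntegral (hmeas S hS) (hfin S hS) hg,
            lintegral_add_left (hf.const_mul _), lintegral_const_mul _ hf,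
            lintegral_const_mul _ hg]
  mem_of_le _ hρ _ hρ' hle := ⟨hρ', fun S hS => (hρ.2 S hS).trans (codimIntegral_mono hle)⟩

theorem tendsto_surfModulus_iUnion {q : ℝ} (hq : 1 < q) {𝒮 : ℕ → Set (Set X)}
    (hmono : Monotone 𝒮) (hmeas : ∀ n, ∀ S ∈ 𝒮 n, MeasurableSet (S ∩ G))
    (hfin : ∀ n, ∀ S ∈ 𝒮 n, codimOneHausdorff μ (S ∩ G) ≠ ⊤) :
    Tendsto (fun n => surfModulus μ q (𝒮 n) G) atTop (𝓝 (surfModulus μ q (⋃ n, 𝒮 n) G)) := by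
  simp only [surfModulus_eq_iInf_eLpNorm_rpow (zero_lt_one.trans hq), ← iInter_surfAdmissible]
  exact (tendsto_iInf_eLpNorm_of_antitone (ENNReal.one_lt_ofReal.2 hq) ENNReal.ofReal_ne_top
    (fun n => isAdmissibleClass_surfAdmissible (hmeas n) (hfin n))
    fun _ _ h => surfAdmissible_anti (hmono h)).ennrpow_const q

theorem surface_modulus_limit_general (hG : MeasurableSet G) (hE : IsClosed E) (hF : IsClosed F)
    {q : ℝ} (hq : 1 < q) :
    Tendsto (fun j : ℕ => surfModulus μ q (farSurfaceSets μ E F G (1 / (j : ℝ))) G) atTop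
      (𝓝 (surfModulus μ q (surfaceSets μ E F G) G)) := by
  -- The shift avoids `j = 0`, where `1 / 0 = 0` breaks the monotonicity.
  rw [← tendsto_add_atTop_iff_nat 1, ← iUnion_farSurfaceSets hE hF]
  have hmono : Monotone fun n : ℕ => farSurfaceSets μ E F G (1 / ((n + 1 : ℕ) : ℝ)) :=
    fun m n h => farSurfaceSets_antitone (by gcongr)
  exact tendsto_surfModulus_iUnion hq hmono
    (fun _ _ hS => hS.1.1.measurableSet.inter hG) fun _ _ hS => hS.1.2.2.1

end SurfaceModulus

/-- The moduli of the truncated surface families converge to the modulus of the full family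
(equation (5.2) of Lohvansuu–Rajala). -/
theorem surface_modulus_limit {X : Type*} [MetricSpace X] [MeasurableSpace X] [BorelSpace X]
    [CompleteSpace X] (μ : Measure X) (hBR : BorelRegular μ)
    (Cμ : ℝ) (hCμ : 1 < Cμ) (hD : IsDoublingWith μ Cμ)
    (CP lP : ℝ) (hCP : 1 ≤ CP) (hlP : 1 ≤ lP) (hPI : WeakPoincare μ 1 CP lP)
    (G E F : Set X)
    (hG : IsDomainWithCompactClosure G) (hE : IsNondegContinuum E) (hF : IsNondegContinuum F)
    (hEG : E ⊆ G) (hFG : F ⊆ G) (hEF : Disjoint E F)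
    (q : ℝ) (hq : 1 < q) :
    Filter.Tendsto
      (fun j : ℕ => surfModulus μ q
        {S ∈ surfaceSets μ E F G | ∀ x ∈ S, ∀ y ∈ E ∪ F, 1 / (j : ℝ) < dist x y} G)
      Filter.atTop (𝓝 (surfModulus μ q (surfaceSets μ E F G) G)) := by
  exact surface_modulus_limit_general hG.1.measurableSet hE.1.isClosed hF.1.isClosed hq
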